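/- Fix m > 0 and take μ(ρ) = −2m/ρ, so that ḡ = e^{−2m/ρ}·diag(1, ρ², ρ² sin²θ, 1) on ρ > 0, 0 < θ < π. Then R̄_{1313}·R̄_{1414}·R̄_{2323}·R̄_{2424} = (det ḡ)²·κ̄², where det ḡ = e^{4μ} ρ⁴ sin²θ and κ̄ = (2m²/ρ⁶)·e^{4m/ρ}·√((1 + m/(2ρ))(1 + m/ρ)); hence the curvature κ̄ = √(R̄_{1313} R̄_{1414} R̄_{2323} R̄_{2424}) / det ḡ equals (2m²/ρ⁶) e^{4m/ρ} √((1 + m/(2ρ))(1 + m/ρ)). -/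

import Mathlib

noncomputable section

/-- Partial derivative of a scalar function on `ℝ⁴` in the `i`-th coordinate direction. -/
def pd (f : (Fin 4 → ℝ) → ℝ) (i : Fin 4) (x : Fin 4 → ℝ) : ℝ :=
  fderiv ℝ f x (Pi.single i 1)

/-- Christoffel symbols of the first kind,
`Γ_{αβ,γ} = ½ (∂_{q^α} g_{βγ} + ∂_{q^β} g_{αγ} - ∂_{q^γ} g_{αβ})`. -/
def Γ1 (g : (Fin 4 → ℝ) → Matrix (Fin 4) (Fin 4) ℝ) (α β γ : Fin 4) (x : Fin 4 → ℝ) : ℝ :=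
  (1 / 2) * (pd (fun y => g y β γ) α x + pd (fun y => g y α γ) β x - pd (fun y => g y α β) γ x)

/-- Covariant Riemann–Christoffel curvature components
`R_{αβδγ} = ∂_{q^δ} Γ_{βγ,α} - ∂_{q^γ} Γ_{βδ,α} + Σ_{λσ} g^{λσ} (Γ_{βδ,λ} Γ_{αγ,σ} - Γ_{βγ,λ} Γ_{αδ,σ})`. -/
def Rcov (g : (Fin 4 → ℝ) → Matrix (Fin 4) (Fin 4) ℝ) (α β δ γ : Fin 4) (x : Fin 4 → ℝ) : ℝ :=
  pd (Γ1 g β γ α) δ x - pd (Γ1 g β δ α) γ x +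
    ∑ lam, ∑ sig, (g x)⁻¹ lam sig *
      (Γ1 g β δ lam x * Γ1 g α γ sig x - Γ1 g β γ lam x * Γ1 g α δ sig x)

/-- The conformally flat-type diagonal metric
`ḡ = e^{μ(ρ)} · diag (1, ρ², ρ² sin² θ, 1)` in coordinates `(ρ, θ, φ, τ) = (x 0, x 1, x 2, x 3)`. -/
def gConf (μ : ℝ → ℝ) (x : Fin 4 → ℝ) : Matrix (Fin 4) (Fin 4) ℝ :=
  Real.exp (μ (x 0)) •
    Matrix.diagonal ![(1 : ℝ), (x 0) ^ 2, (x 0) ^ 2 * Real.sin (x 1) ^ 2, 1]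

lemma pd_prod (f h : ℝ → ℝ) (f' h' : ℝ) (x : Fin 4 → ℝ) (hf : HasDerivAt f f' (x 0))
    (hh : HasDerivAt h h' (x 1)) (i : Fin 4) :
    pd (fun y => f (y 0) * h (y 1)) i x =
      (![f' * h (x 1), f (x 0) * h', 0, 0] : Fin 4 → ℝ) i := by
  have h0 : HasFDerivAt (fun y : Fin 4 → ℝ => y 0)
      (ContinuousLinearMap.proj (R := ℝ) (φ := fun _ : Fin 4 => ℝ) 0) x :=
    (ContinuousLinearMap.proj (R := ℝ) (φ := fun _ : Fin 4 => ℝ) 0).hasFDerivAt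
  have h1 : HasFDerivAt (fun y : Fin 4 → ℝ => y 1)
      (ContinuousLinearMap.proj (R := ℝ) (φ := fun _ : Fin 4 => ℝ) 1) x :=
    (ContinuousLinearMap.proj (R := ℝ) (φ := fun _ : Fin 4 => ℝ) 1).hasFDerivAt
  have hF := hf.comp_hasFDerivAt x h0
  have hH := hh.comp_hasFDerivAt x h1
  have := (hF.mul hH).fderiv
  unfold pd
  change fderiv ℝ ((f ∘ fun y : Fin 4 → ℝ => y 0) * (h ∘ fun y : Fin 4 → ℝ => y 1)) x _ = _
  rw [this]
  fin_cases i <;> simp [Pi.single_apply] <;> ring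

lemma pd_congr (f g : (Fin 4 → ℝ) → ℝ) (x : Fin 4 → ℝ) (hx : x 0 ≠ 0)
    (h : ∀ y : Fin 4 → ℝ, y 0 ≠ 0 → f y = g y) (i : Fin 4) : pd f i x = pd g i x := by
  unfold pd
  have : f =ᶠ[nhds x] g := by
    have h2 : ∀ᶠ y : Fin 4 → ℝ in nhds x, y 0 ≠ 0 :=
      (continuous_apply (0 : Fin 4)).continuousAt.eventually_ne hx
    filter_upwards [h2] with y hy using h y hy
  rw [this.fderiv_eq]

lemma pd_zero (i : Fin 4) (x : Fin 4 → ℝ) : pd (fun _ => (0 : ℝ)) i x = 0 := by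
  simp [pd]

lemma hasDeriv_E (m r : ℝ) (hr : r ≠ 0) :
    HasDerivAt (fun t : ℝ => Real.exp (-(2 * m) / t))
      (Real.exp (-(2 * m) / r) * (2 * m / r ^ 2)) r := by
  have h := ((hasDerivAt_inv hr).const_mul (-(2 * m))).exp
  simp only [← div_eq_mul_inv] at h
  refine h.congr_deriv ?_
  field_simp

lemma hasDeriv_E2 (m r : ℝ) (hr : r ≠ 0) :
    HasDerivAt (fun t : ℝ => Real.exp (-(2 * m) / t) * t ^ 2)
      (Real.exp (-(2 * m) / r) * (2 * m + 2 * r)) r := by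
  have h := (hasDeriv_E m r hr).mul (hasDerivAt_pow 2 r)
  refine h.congr_deriv ?_
  field_simp
  simp
  ring

lemma hasDeriv_s2 (t : ℝ) :
    HasDerivAt (fun t : ℝ => Real.sin t ^ 2) (2 * Real.sin t * Real.cos t) t := by
  refine ((Real.hasDerivAt_sin t).pow 2).congr_deriv ?_
  simp

lemma pd_g (m : ℝ) (μ : ℝ → ℝ) (hμ : ∀ ρ : ℝ, μ ρ = -(2 * m) / ρ) (x : Fin 4 → ℝ)
    (hx : x 0 ≠ 0) (a b i : Fin 4) :
    pd (fun y => gConf μ y a b) i x = if a = b then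
      (![![Real.exp (-(2 * m) / x 0) * (2 * m / x 0 ^ 2), 0, 0, 0],
        ![Real.exp (-(2 * m) / x 0) * (2 * m + 2 * x 0), 0, 0, 0],
        ![Real.exp (-(2 * m) / x 0) * (2 * m + 2 * x 0) * Real.sin (x 1) ^ 2,
          Real.exp (-(2 * m) / x 0) * x 0 ^ 2 * (2 * Real.sin (x 1) * Real.cos (x 1)), 0, 0],
        ![Real.exp (-(2 * m) / x 0) * (2 * m / x 0 ^ 2), 0, 0, 0]] :
          Fin 4 → Fin 4 → ℝ) a i else 0 := by
  split_ifs with hab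
  · subst hab
    have e1 := pd_prod _ (fun _ => 1) _ 0 x (hasDeriv_E m (x 0) hx) (hasDerivAt_const _ _) i
    have e2 := pd_prod _ (fun _ => 1) _ 0 x (hasDeriv_E2 m (x 0) hx) (hasDerivAt_const _ _) i
    have e3 := pd_prod _ _ _ _ x (hasDeriv_E2 m (x 0) hx) (hasDeriv_s2 (x 1)) i
    simp only [mul_one, mul_zero] at e1 e2
    fin_cases a
    · simpa [gConf, hμ] using e1
    · simpa [gConf, hμ] using e2
    · simpa [gConf, hμ, mul_assoc] using e3
    · simpa [gConf, hμ] using e1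
  · have : (fun y => gConf μ y a b) = fun _ => 0 := by
      funext y
      simp [gConf, Matrix.diagonal_apply_ne _ hab]
    rw [this, pd_zero]

lemma inv_g (μ : ℝ → ℝ) (x : Fin 4 → ℝ) (hx : x 0 ≠ 0) (hs : Real.sin (x 1) ≠ 0) :
    (gConf μ x)⁻¹ = Matrix.diagonal ![(Real.exp (μ (x 0)))⁻¹, (Real.exp (μ (x 0)) * x 0 ^ 2)⁻¹,
      (Real.exp (μ (x 0)) * x 0 ^ 2 * Real.sin (x 1) ^ 2)⁻¹, (Real.exp (μ (x 0)))⁻¹] := by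
  apply Matrix.inv_eq_right_inv
  have hE := Real.exp_ne_zero (μ (x 0))
  rw [gConf, Matrix.smul_mul, Matrix.diagonal_mul_diagonal, ← Matrix.diagonal_smul,
    ← Matrix.diagonal_one]
  congr 1
  funext i
  fin_cases i <;> simp <;> field_simp

lemma det_g (μ : ℝ → ℝ) (x : Fin 4 → ℝ) :
    (gConf μ x).det = Real.exp (4 * μ (x 0)) * (x 0) ^ 4 * Real.sin (x 1) ^ 2 := by
  have : Real.exp (4 * μ (x 0)) = Real.exp (μ (x 0)) ^ 4 := by
    rw [← Real.exp_nat_mul]; norm_num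
  rw [gConf, Matrix.det_smul, Matrix.det_diagonal, this]
  simp [Fin.prod_univ_four]
  ring

section
variable (m : ℝ) (μ : ℝ → ℝ) (hμ : ∀ ρ : ℝ, μ ρ = -(2 * m) / ρ) (x : Fin 4 → ℝ)
  (hx : x 0 ≠ 0)

include hμ hx

lemma dΓ220 (i : Fin 4) : pd (Γ1 (gConf μ) 2 2 0) i x =
    (![-Real.exp (-(2 * m) / x 0) * (2 * m / x 0 ^ 2 * (m + x 0) + 1) * Real.sin (x 1) ^ 2,
      -Real.exp (-(2 * m) / x 0) * (m + x 0) * (2 * Real.sin (x 1) * Real.cos (x 1)), 0, 0] :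
      Fin 4 → ℝ) i := by
  have hd := ((hasDeriv_E m (x 0) hx).mul ((hasDerivAt_id (x 0)).const_add m)).neg
  have e := pd_prod _ _ _ _ x hd (hasDeriv_s2 (x 1)) i
  rw [pd_congr _ _ x hx _ i, e]
  · fin_cases i <;> simp <;> ring
  · intro y hy
    simp [Γ1, pd_g m μ hμ y hy]
    ring

lemma dΓ330 (i : Fin 4) : pd (Γ1 (gConf μ) 3 3 0) i x =
    (![-Real.exp (-(2 * m) / x 0) * (2 * m ^ 2 / x 0 ^ 4 - 2 * m / x 0 ^ 3), 0, 0, 0] :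
      Fin 4 → ℝ) i := by
  have hd := ((hasDeriv_E m (x 0) hx).mul
    ((((hasDerivAt_id (x 0)).pow 2).inv (pow_ne_zero 2 hx)).const_mul m)).neg
  have e := pd_prod _ (fun _ => 1) _ 0 x hd (hasDerivAt_const _ _) i
  rw [pd_congr _ _ x hx _ i, e]
  · fin_cases i <;> simp
    field_simp
    ring
  · intro y hy
    simp [Γ1, pd_g m μ hμ y hy]
    ring

lemma dΓ221 (i : Fin 4) : pd (Γ1 (gConf μ) 2 2 1) i x =
    (![-Real.exp (-(2 * m) / x 0) * (2 * m + 2 * x 0) * (Real.sin (x 1) * Real.cos (x 1)),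
      -Real.exp (-(2 * m) / x 0) * x 0 ^ 2 * (Real.cos (x 1) ^ 2 - Real.sin (x 1) ^ 2), 0, 0] :
      Fin 4 → ℝ) i := by
  have hd := (hasDeriv_E2 m (x 0) hx).neg
  have e := pd_prod _ _ _ _ x hd ((Real.hasDerivAt_sin (x 1)).mul (Real.hasDerivAt_cos (x 1))) i
  rw [pd_congr _ _ x hx _ i, e]
  · fin_cases i <;> simp <;> ring_nf
    simp
  · intro y hy
    simp [Γ1, pd_g m μ hμ y hy]
    ring

lemma dΓ0 (a b c : Fin 4) (h : ∀ y : Fin 4 → ℝ, y 0 ≠ 0 → Γ1 (gConf μ) a b c y = 0)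
    (i : Fin 4) : pd (Γ1 (gConf μ) a b c) i x = 0 := by
  rw [pd_congr _ (fun _ => 0) x hx h i, pd_zero]

variable (hs : Real.sin (x 1) ≠ 0)
include hs

lemma R02 : Rcov (gConf μ) 0 2 0 2 x =
    Real.exp (-(2 * m) / x 0) * (m * Real.sin (x 1) ^ 2 / x 0) := by
  have z : pd (Γ1 (gConf μ) 2 0 0) 2 x = 0 := by
    apply dΓ0 m μ hμ x hx
    intro y hy
    simp [Γ1, pd_g m μ hμ y hy]
  have hE := Real.exp_ne_zero (-(2 * m) / x 0)
  rw [Rcov, z, dΓ220 m μ hμ x hx, inv_g μ x hx hs]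
  simp [Fin.sum_univ_four, Matrix.diagonal_apply, Γ1, pd_g m μ hμ x hx, hμ]
  generalize Real.exp (-(2 * m) / x 0) = E at *
  field_simp
  ring

lemma R03 : Rcov (gConf μ) 0 3 0 3 x =
    Real.exp (-(2 * m) / x 0) * (2 * m / x 0 ^ 3) := by
  have z : pd (Γ1 (gConf μ) 3 0 0) 3 x = 0 := by
    apply dΓ0 m μ hμ x hx
    intro y hy
    simp [Γ1, pd_g m μ hμ y hy]
  have hE := Real.exp_ne_zero (-(2 * m) / x 0)
  rw [Rcov, z, dΓ330 m μ hμ x hx, inv_g μ x hx hs]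
  simp [Fin.sum_univ_four, Matrix.diagonal_apply, Γ1, pd_g m μ hμ x hx, hμ]
  generalize Real.exp (-(2 * m) / x 0) = E at *
  field_simp
  ring

lemma R12 : Rcov (gConf μ) 1 2 1 2 x =
    -Real.exp (-(2 * m) / x 0) * (Real.sin (x 1) ^ 2 * (2 * m * x 0 + m ^ 2)) := by
  have z : pd (Γ1 (gConf μ) 2 1 1) 2 x = 0 := by
    apply dΓ0 m μ hμ x hx
    intro y hy
    simp [Γ1, pd_g m μ hμ y hy]
  have hE := Real.exp_ne_zero (-(2 * m) / x 0)
  rw [Rcov, z, dΓ221 m μ hμ x hx, inv_g μ x hx hs]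
  simp [Fin.sum_univ_four, Matrix.diagonal_apply, Γ1, pd_g m μ hμ x hx, hμ]
  generalize Real.exp (-(2 * m) / x 0) = E at *
  field_simp
  ring

lemma R13 : Rcov (gConf μ) 1 3 1 3 x =
    -Real.exp (-(2 * m) / x 0) * (m / x 0 + m ^ 2 / x 0 ^ 2) := by
  have z : pd (Γ1 (gConf μ) 3 1 1) 3 x = 0 := by
    apply dΓ0 m μ hμ x hx
    intro y hy
    simp [Γ1, pd_g m μ hμ y hy]
  have z2 : pd (Γ1 (gConf μ) 3 3 1) 1 x = 0 := by
    apply dΓ0 m μ hμ x hx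
    intro y hy
    simp [Γ1, pd_g m μ hμ y hy]
  have hE := Real.exp_ne_zero (-(2 * m) / x 0)
  rw [Rcov, z, z2, inv_g μ x hx hs]
  simp [Fin.sum_univ_four, Matrix.diagonal_apply, Γ1, pd_g m μ hμ x hx, hμ]
  generalize Real.exp (-(2 * m) / x 0) = E at *
  field_simp
  ring

end

/-- for the metric `ḡ = e^{-2m/ρ} · diag (1, ρ², ρ² sin² θ, 1)` on `ρ > 0`,
`0 < θ < π` (i.e. `μ(ρ) = -2m/ρ`), one has
`R̄₁₃₁₃ R̄₁₄₁₄ R̄₂₃₂₃ R̄₂₄₂₄ = (det ḡ)² κ̄²` with `det ḡ = e^{4μ} ρ⁴ sin² θ` and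
`κ̄ = (2m²/ρ⁶) e^{4m/ρ} √((1 + m/(2ρ)) (1 + m/ρ))`; hence the curvature
`κ̄ = √(R̄₁₃₁₃ R̄₁₄₁₄ R̄₂₃₂₃ R̄₂₄₂₄) / det ḡ` equals this value.  (Indices are 0-based.) -/
theorem conformal_curvature (m : ℝ) (hm : 0 < m) (μ : ℝ → ℝ)
    (hμdef : ∀ ρ : ℝ, μ ρ = -(2 * m) / ρ) :
    ∀ x : Fin 4 → ℝ, 0 < x 0 → 0 < x 1 → x 1 < Real.pi →
      Rcov (gConf μ) 0 2 0 2 x * Rcov (gConf μ) 0 3 0 3 x *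
          Rcov (gConf μ) 1 2 1 2 x * Rcov (gConf μ) 1 3 1 3 x =
        ((gConf μ x).det) ^ 2 *
          (2 * m ^ 2 / (x 0) ^ 6 * Real.exp (4 * m / x 0) *
            Real.sqrt ((1 + m / (2 * x 0)) * (1 + m / x 0))) ^ 2 ∧
      (gConf μ x).det = Real.exp (4 * μ (x 0)) * (x 0) ^ 4 * Real.sin (x 1) ^ 2 ∧
      Real.sqrt (Rcov (gConf μ) 0 2 0 2 x * Rcov (gConf μ) 0 3 0 3 x *
            Rcov (gConf μ) 1 2 1 2 x * Rcov (gConf μ) 1 3 1 3 x) /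
          (gConf μ x).det =
        2 * m ^ 2 / (x 0) ^ 6 * Real.exp (4 * m / x 0) *
          Real.sqrt ((1 + m / (2 * x 0)) * (1 + m / x 0)) := by
  intro x hx h1 h2
  have hs : 0 < Real.sin (x 1) := Real.sin_pos_of_pos_of_lt_pi h1 h2
  have hx' := hx.ne'
  have hdet := det_g μ x
  have key : Rcov (gConf μ) 0 2 0 2 x * Rcov (gConf μ) 0 3 0 3 x *
          Rcov (gConf μ) 1 2 1 2 x * Rcov (gConf μ) 1 3 1 3 x =
        ((gConf μ x).det) ^ 2 *
          (2 * m ^ 2 / (x 0) ^ 6 * Real.exp (4 * m / x 0) *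
            Real.sqrt ((1 + m / (2 * x 0)) * (1 + m / x 0))) ^ 2 := by
    have hE := Real.exp_ne_zero (-(2 * m) / x 0)
    have hp : 0 ≤ (1 + m / (2 * x 0)) * (1 + m / x 0) := by positivity
    have e1 : Real.exp (4 * μ (x 0)) = Real.exp (-(2 * m) / x 0) ^ 4 := by
      rw [← Real.exp_nat_mul, hμdef]; norm_num
    have e2 : Real.exp (4 * m / x 0) = (Real.exp (-(2 * m) / x 0) ^ 2)⁻¹ := by
      rw [← Real.exp_nat_mul, ← Real.exp_neg]; congr 1; push_cast; ring
    rw [R02 m μ hμdef x hx' hs.ne', R03 m μ hμdef x hx' hs.ne', R12 m μ hμdef x hx' hs.ne',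
      R13 m μ hμdef x hx' hs.ne', hdet, e1, e2, mul_pow _ (Real.sqrt _), Real.sq_sqrt hp]
    generalize Real.exp (-(2 * m) / x 0) = E at *
    field_simp
  refine ⟨key, hdet, ?_⟩
  have hd : 0 < (gConf μ x).det := by rw [hdet]; positivity
  rw [key, ← mul_pow, Real.sqrt_sq (by positivity), mul_div_cancel_left₀ _ hd.ne']

end
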